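/- Let f : [ω₂]² → [ω₂]^{≤ω} satisfy f{α,β} ⊆ α ∩ β for all pairs, let p = (a,h,i) and p' = (a',h',i') be good twins in P_f, and for η ∈ ⋃{h(δ) : δ ∈ a ∩ a'} ∪ ⋃{h'(δ) : δ ∈ a ∩ a'} let δ_η = min{δ ∈ a ∩ a' : η ∈ h(δ) ∪ h'(δ)}. Then for every η ∈ a and every δ ∈ a ∩ a': η ∈ h(δ) if and only if δ_η is defined and δ_η ∈ h(δ). -/

import Mathlib

attribute [local instance] Classical.propDecidable

noncomputable section

/-- The second uncountable cardinal ω₂, as an ordinal. -/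
def omega2 : Ordinal := (Cardinal.aleph 2).ord

/-- The operation `x * y` on nonempty finite sets of ordinals with `max x ≠ max y`:
`x \ y` if `max x ∈ y`, `y \ x` if `max y ∈ x`, and `x ∩ y` otherwise. -/
def ostar (x y : Finset Ordinal) : Finset Ordinal :=
  if ∃ m ∈ y, x.max = (m : WithBot Ordinal) then x \ y
  else if ∃ m ∈ x, y.max = (m : WithBot Ordinal) then y \ x
  else x ∩ y

/-- The conditions of the poset `P_f`: triples `(a, h, i)` where `a` is a finite
subset of ω₂, `h : a → 𝒫(a)` with `max (h ξ) = ξ`, `i : [a]² → 𝒫(a)` with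
`i {ξ,η} ⊆ f {ξ,η}`, and `h ξ * h η ⊆ ⋃ {h ν : ν ∈ i {ξ,η}}`. -/
structure PfCond (f : Ordinal → Ordinal → Set Ordinal) where
  a : Finset Ordinal
  h : Ordinal → Finset Ordinal
  i : Ordinal → Ordinal → Finset Ordinal
  a_lt : ∀ ξ ∈ a, ξ < omega2
  h_sub : ∀ ξ ∈ a, h ξ ⊆ a
  h_mem : ∀ ξ ∈ a, ξ ∈ h ξ
  h_le : ∀ ξ ∈ a, ∀ η ∈ h ξ, η ≤ ξ
  i_symm : ∀ ξ η, i ξ η = i η ξ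
  i_sub_f : ∀ ξ ∈ a, ∀ η ∈ a, ξ ≠ η → ∀ ν ∈ i ξ η, ν ∈ f ξ η
  i_sub_a : ∀ ξ ∈ a, ∀ η ∈ a, ξ ≠ η → i ξ η ⊆ a
  star_cond : ∀ ξ ∈ a, ∀ η ∈ a, ξ ≠ η → ostar (h ξ) (h η) ⊆ (i ξ η).biUnion h

/-- The order on `P_f`: `p ≤ q` iff `a^p ⊇ a^q`, `h^p(ξ) ∩ a^q = h^q(ξ)` for
`ξ ∈ a^q`, and `i^p` extends `i^q`. -/
def PfLe {f : Ordinal → Ordinal → Set Ordinal} (p q : PfCond f) : Prop :=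
  q.a ⊆ p.a ∧ (∀ ξ ∈ q.a, p.h ξ ∩ q.a = q.h ξ) ∧
    ∀ ξ ∈ q.a, ∀ η ∈ q.a, ξ ≠ η → p.i ξ η = q.i ξ η

/-- Two finite subsets `x` and `y` of ω₂ are good for `f`. -/
def GoodFor (f : Ordinal → Ordinal → Set Ordinal) (x y : Finset Ordinal) : Prop :=
  ∀ α ∈ x ∩ y, ∀ β ∈ x \ y, ∀ γ ∈ y \ x,
    ((α < β ∧ α < γ) → α ∈ f β γ) ∧
    (α < β → f α γ ⊆ f β γ) ∧
    (α < γ → f α β ⊆ f γ β)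

/-- `p` and `p'` are good twins: the natural order preserving bijection between
`a^p` and `a^{p'}` is an isomorphism of the conditions fixing `a^p ∩ a^{p'}`,
`i` and `i'` agree on pairs from `a^p ∩ a^{p'}`, and `a^p`, `a^{p'}` are good
for `f`. -/
def GoodTwins {f : Ordinal → Ordinal → Set Ordinal} (p p' : PfCond f) : Prop :=
  (∃ e : Ordinal → Ordinal,
    Set.BijOn e ↑p.a ↑p'.a ∧
    (∀ ξ ∈ p.a, ∀ η ∈ p.a, ξ < η → e ξ < e η) ∧
    (∀ ξ ∈ p.a ∩ p'.a, e ξ = ξ) ∧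
    (∀ ξ ∈ p.a, p'.h (e ξ) = (p.h ξ).image e) ∧
    (∀ ξ ∈ p.a, ∀ η ∈ p.a, ξ ≠ η → p'.i (e ξ) (e η) = (p.i ξ η).image e)) ∧
  (∀ ξ ∈ p.a ∩ p'.a, ∀ η ∈ p.a ∩ p'.a, ξ ≠ η → p.i ξ η = p'.i ξ η) ∧
  GoodFor f p.a p'.a

/-- `δ` is the ordinal `δ_η = min {δ ∈ a^p ∩ a^{p'} : η ∈ h^p(δ) ∪ h^{p'}(δ)}`. -/
def DeltaIs {f : Ordinal → Ordinal → Set Ordinal} (p p' : PfCond f)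
    (η δ : Ordinal) : Prop :=
  δ ∈ p.a ∩ p'.a ∧ η ∈ p.h δ ∪ p'.h δ ∧
    ∀ δ' ∈ p.a ∩ p'.a, η ∈ p.h δ' ∪ p'.h δ' → δ ≤ δ'

/-!
Let `d = δ_η < δ`. As `h d` and `h' d` have the same trace on `a ∩ a'`, we have `η ∈ h d`. Were
`η ∈ h δ` and `d ∈ h δ` not equivalent, `η` would lie in `h d * h δ`, hence in `h ν` for some
`ν ∈ i {d, δ}`. Since `i` and `i'` agree on pairs from `a ∩ a'`, this `ν` belongs to `a ∩ a'`, while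
`ν ∈ f {d, δ}` forces `ν < d`, against the minimality of `d`.
-/

theorem ostar_of_max_mem {x y : Finset Ordinal} {m : Ordinal} (hx : x.max = m) (hm : m ∈ y) :
    ostar x y = x \ y :=
  if_pos ⟨m, hm, hx⟩

theorem ostar_of_max_notMem {x y : Finset Ordinal} {m n : Ordinal} (hx : x.max = m)
    (hy : y.max = n) (hm : m ∉ y) (hn : n ∉ x) : ostar x y = x ∩ y := by
  simp only [ostar, hx, hy, WithBot.coe_inj, exists_eq_right', hm, hn, if_false]

theorem image_inter_eq_inter_of_fixes_inter {α : Type*} [DecidableEq α] {s a b : Finset α}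
    {e : α → α} (hinj : Set.InjOn e a) (hfix : ∀ ξ ∈ a ∩ b, e ξ = ξ) (hs : s ⊆ a)
    (hsb : s.image e ⊆ b) : s.image e ∩ a = s ∩ b := by
  ext ζ
  simp only [Finset.mem_inter]
  constructor
  · rintro ⟨hζ, hζa⟩
    have hζb : ζ ∈ b := hsb hζ
    obtain ⟨ξ, hξ, hξζ⟩ := Finset.mem_image.1 hζ
    have hζζ : e ζ = ζ := hfix ζ (Finset.mem_inter.2 ⟨hζa, hζb⟩)
    have hξeq : ξ = ζ := hinj (hs hξ) hζa (hξζ.trans hζζ.symm)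
    exact ⟨hξeq ▸ hξ, hζb⟩
  · rintro ⟨hζ, hζb⟩
    have hζζ : e ζ = ζ := hfix ζ (Finset.mem_inter.2 ⟨hs hζ, hζb⟩)
    exact ⟨Finset.mem_image.2 ⟨ζ, hζ, hζζ⟩, hs hζ⟩

section

variable {f : Ordinal → Ordinal → Set Ordinal} {p p' : PfCond f} {η d δ : Ordinal}

namespace PfCond

theorem max_h (p : PfCond f) (hδ : δ ∈ p.a) : (p.h δ).max = δ :=
  le_antisymm (Finset.max_le fun η hη => WithBot.coe_le_coe.2 (p.h_le δ hδ η hη))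
    (Finset.le_max (p.h_mem δ hδ))

theorem notMem_h_of_lt (p : PfCond f) (hd : d ∈ p.a) (hlt : d < δ) : δ ∉ p.h d :=
  fun h => (p.h_le d hd δ h).not_gt hlt

theorem h_sdiff_h_subset_biUnion_i (p : PfCond f) (hd : d ∈ p.a) (hδ : δ ∈ p.a) (hne : d ≠ δ)
    (hmem : d ∈ p.h δ) : p.h d \ p.h δ ⊆ (p.i d δ).biUnion p.h :=
  ostar_of_max_mem (p.max_h hd) hmem ▸ p.star_cond d hd δ hδ hne

theorem h_inter_h_subset_biUnion_i (p : PfCond f) (hd : d ∈ p.a) (hδ : δ ∈ p.a) (hne : d ≠ δ)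
    (hdδ : d ∉ p.h δ) (hδd : δ ∉ p.h d) : p.h d ∩ p.h δ ⊆ (p.i d δ).biUnion p.h :=
  ostar_of_max_notMem (p.max_h hd) (p.max_h hδ) hdδ hδd ▸ p.star_cond d hd δ hδ hne

theorem mem_h_iff_mem_h_of_notMem_biUnion_i (p : PfCond f) (hd : d ∈ p.a) (hδ : δ ∈ p.a)
    (hlt : d < δ) (hη : η ∈ p.h d) (hi : η ∉ (p.i d δ).biUnion p.h) :
    η ∈ p.h δ ↔ d ∈ p.h δ := by
  constructor
  · intro hηδ
    by_contra hdδ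
    exact hi (p.h_inter_h_subset_biUnion_i hd hδ hlt.ne hdδ (p.notMem_h_of_lt hd hlt)
      (Finset.mem_inter.2 ⟨hη, hηδ⟩))
  · intro hdδ
    by_contra hηδ
    exact hi (p.h_sdiff_h_subset_biUnion_i hd hδ hlt.ne hdδ (Finset.mem_sdiff.2 ⟨hη, hηδ⟩))

/-- Two conditions agree on the common part `a ∩ a'` of their supports: `h` and `h'` have the same
trace on it, and `i` and `i'` coincide on pairs from it. This isolates the aspect of good twins
behind the minimality argument for `δ_η`; the traces are written with the opposite support, since
`h δ ⊆ a` and `h' δ ⊆ a'`. -/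
structure AgreeOnInter (p p' : PfCond f) : Prop where
  h_inter_eq : ∀ δ ∈ p.a ∩ p'.a, p'.h δ ∩ p.a = p.h δ ∩ p'.a
  i_eq : ∀ ξ ∈ p.a ∩ p'.a, ∀ η ∈ p.a ∩ p'.a, ξ ≠ η → p.i ξ η = p'.i ξ η

namespace AgreeOnInter

theorem mem_h_of_mem_h (hp : AgreeOnInter p p') (hη : η ∈ p.a) (hδ : δ ∈ p.a ∩ p'.a)
    (h : η ∈ p'.h δ) : η ∈ p.h δ :=
  Finset.mem_of_mem_inter_left (hp.h_inter_eq δ hδ ▸ Finset.mem_inter.2 ⟨h, hη⟩)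

theorem i_subset_inter (hp : AgreeOnInter p p') (hd : d ∈ p.a ∩ p'.a) (hδ : δ ∈ p.a ∩ p'.a)
    (hne : d ≠ δ) : p.i d δ ⊆ p.a ∩ p'.a := by
  obtain ⟨hda, hda'⟩ := Finset.mem_inter.1 hd
  obtain ⟨hδa, hδa'⟩ := Finset.mem_inter.1 hδ
  exact Finset.subset_inter (p.i_sub_a d hda δ hδa hne)
    (hp.i_eq d hd δ hδ hne ▸ p'.i_sub_a d hda' δ hδa' hne)

end AgreeOnInter

end PfCond

theorem GoodTwins.agreeOnInter (htw : GoodTwins p p') : p.AgreeOnInter p' := by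
  obtain ⟨⟨e, hbij, -, hfix, hh, -⟩, hi, -⟩ := htw
  refine ⟨fun δ hδ => ?_, hi⟩
  obtain ⟨hδa, hδa'⟩ := Finset.mem_inter.1 hδ
  have himage : p'.h δ = (p.h δ).image e := by rw [← hh δ hδa, hfix δ hδ]
  rw [himage]
  exact image_inter_eq_inter_of_fixes_inter hbij.injOn hfix (p.h_sub δ hδa)
    (himage ▸ p'.h_sub δ hδa')

theorem deltaIs_iff_isLeast :
    DeltaIs p p' η d ↔ IsLeast {δ | δ ∈ p.a ∩ p'.a ∧ η ∈ p.h δ ∪ p'.h δ} d := by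
  simp only [DeltaIs, IsLeast, mem_lowerBounds, Set.mem_ofPred_eq, and_assoc, and_imp]

theorem exists_deltaIs (hδ : δ ∈ p.a ∩ p'.a) (hη : η ∈ p.h δ ∪ p'.h δ) :
    ∃ d, DeltaIs p p' η d :=
  ⟨_, deltaIs_iff_isLeast.2 (isLeast_csInf ⟨δ, hδ, hη⟩)⟩

namespace DeltaIs

theorem mem_h (hD : DeltaIs p p' η d) (hp : p.AgreeOnInter p') (hη : η ∈ p.a) : η ∈ p.h d :=
  (Finset.mem_union.1 hD.2.1).elim id (hp.mem_h_of_mem_h hη hD.1)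

theorem le_of_mem_h (hD : DeltaIs p p' η d) (hδ : δ ∈ p.a ∩ p'.a) (hη : η ∈ p.h δ) : d ≤ δ :=
  hD.2.2 δ hδ (Finset.mem_union_left _ hη)

theorem notMem_biUnion_i (hD : DeltaIs p p' η d) (hlt : ∀ α β γ, γ ∈ f α β → γ < α)
    (hp : p.AgreeOnInter p') (hδ : δ ∈ p.a ∩ p'.a) (hne : d ≠ δ) :
    η ∉ (p.i d δ).biUnion p.h := by
  intro hη
  obtain ⟨ν, hν, hην⟩ := Finset.mem_biUnion.1 hη
  have hνd : ν < d := hlt d δ ν <| p.i_sub_f d (Finset.mem_of_mem_inter_left hD.1) δ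
    (Finset.mem_of_mem_inter_left hδ) hne ν hν
  exact (hD.le_of_mem_h (hp.i_subset_inter hD.1 hδ hne hν) hην).not_gt hνd

theorem mem_h_iff_mem_h (hD : DeltaIs p p' η d) (hlt : ∀ α β γ, γ ∈ f α β → γ < α)
    (hp : p.AgreeOnInter p') (hη : η ∈ p.a) (hδ : δ ∈ p.a ∩ p'.a) (hle : d ≤ δ) :
    η ∈ p.h δ ↔ d ∈ p.h δ := by
  have hda : d ∈ p.a := Finset.mem_of_mem_inter_left hD.1
  rcases hle.eq_or_lt with rfl | hdδ
  · exact iff_of_true (hD.mem_h hp hη) (p.h_mem d hda)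
  · exact p.mem_h_iff_mem_h_of_notMem_biUnion_i hda (Finset.mem_of_mem_inter_left hδ) hdδ
      (hD.mem_h hp hη) (hD.notMem_biUnion_i hlt hp hδ hdδ.ne)

end DeltaIs

end

theorem stmt12_general
    (f : Ordinal → Ordinal → Set Ordinal)
    (hlt : ∀ α β γ, γ ∈ f α β → γ < α)
    (p p' : PfCond f) (hp : p.AgreeOnInter p')
    (η : Ordinal) (hη : η ∈ p.a) (δ : Ordinal) (hδ : δ ∈ p.a ∩ p'.a) :
    η ∈ p.h δ ↔ ∃ d, DeltaIs p p' η d ∧ d ∈ p.h δ := by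
  constructor
  · intro hηδ
    obtain ⟨d, hD⟩ := exists_deltaIs hδ (Finset.mem_union_left (p'.h δ) hηδ)
    exact ⟨d, hD, (hD.mem_h_iff_mem_h hlt hp hη hδ (hD.le_of_mem_h hδ hηδ)).1 hηδ⟩
  · rintro ⟨d, hD, hdδ⟩
    have hle : d ≤ δ := p.h_le δ (Finset.mem_of_mem_inter_left hδ) d hdδ
    exact (hD.mem_h_iff_mem_h hlt hp hη hδ hle).2 hdδ

theorem stmt12
    (f : Ordinal → Ordinal → Set Ordinal)
    (hsymm : ∀ α β, f α β = f β α)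
    (hlt : ∀ α β γ, γ ∈ f α β → γ < α ∧ γ < β)
    (hcount : ∀ α β, (f α β).Countable)
    (p p' : PfCond f) (htw : GoodTwins p p')
    (η : Ordinal) (hη : η ∈ p.a) (δ : Ordinal) (hδ : δ ∈ p.a ∩ p'.a) :
    η ∈ p.h δ ↔ ∃ d, DeltaIs p p' η d ∧ d ∈ p.h δ :=
  stmt12_general f (fun α β γ hγ => (hlt α β γ hγ).1) p p' htw.agreeOnInter η hη δ hδ
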